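/- arXiv:2501.18725 — 2 statements merged into one kernel-verified Lean document; each statement's English description precedes it below -/
import Mathlib

section
/- Let x ≥ 1, λ ≥ 6, y ≤ −3x and 0 < ρ ≤ 1 be real numbers, and define h(t) = (x(λ+1)t + x²(λ−1)) / ((λ−1)t + (λ+1)x). Then both denominators (λ−1)y + (λ+1)x and (λ−1)(y+ρ) + (λ+1)x are nonzero, and |h(y) − h(y+ρ)| ≤ (8 / (√λ · |y/x + 1|))² · ρ = 64ρ / (λ (y/x + 1)²). -/
/-!
The transformation `h` has fixed points `±x`, and its pole lies close to the repelling one, `-x`.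
For the denominator `D t = (lam - 1) * (t + x) + 2 * x` one has
`h y - h z = 4 * lam * x ^ 2 * (y - z) / (D y * D z)`. When `y ≤ -3 * x` and `z` is at least half
as far to the left of `-x` as `y` is, the term `2 * x` is dominated by the other one, so that
`|D y|` and `|D z|` are both at least of order `lam * |y + x|`.
-/

section Field

variable {K : Type*} [Field K]

/-- The denominator of `hyperbolicMobius x lam`; its zero is the pole of the transformation. -/
def hyperbolicMobiusDenom (x lam t : K) : K :=
  (lam - 1) * t + (lam + 1) * x

/-- The Möbius transformation `h` with fixed points `x` and `-x` that multiplies the cross-ratio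
coordinate `(t - x) / (t + x)` by `lam⁻¹`. At its pole it takes the junk value `0`. -/
def hyperbolicMobius (x lam t : K) : K :=
  (x * (lam + 1) * t + x ^ 2 * (lam - 1)) / hyperbolicMobiusDenom x lam t

theorem hyperbolicMobius_sub {x lam y z : K} (hy : hyperbolicMobiusDenom x lam y ≠ 0)
    (hz : hyperbolicMobiusDenom x lam z ≠ 0) :
    hyperbolicMobius x lam y - hyperbolicMobius x lam z =
      4 * lam * x ^ 2 * (y - z) /
        (hyperbolicMobiusDenom x lam y * hyperbolicMobiusDenom x lam z) := by
  rw [hyperbolicMobius, hyperbolicMobius, div_sub_div _ _ hy hz]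
  congr 1
  simp only [hyperbolicMobiusDenom]
  ring

end Field

section OrderedField

variable {K : Type*} [Field K] [LinearOrder K] [IsStrictOrderedRing K] {x lam y z : K}

theorem hyperbolicMobiusDenom_le_mul_add {c t : K} (h : 2 * x ≤ c * -(t + x)) :
    hyperbolicMobiusDenom x lam t ≤ (lam - 1 - c) * (t + x) := by
  rw [hyperbolicMobiusDenom]
  linarith

theorem hyperbolicMobiusDenom_neg {t : K} (hx : 0 < x) (hlam : 3 < lam) (ht : t ≤ -2 * x) :
    hyperbolicMobiusDenom x lam t < 0 :=
  calc
    hyperbolicMobiusDenom x lam t ≤ (lam - 1 - 2) * (t + x) :=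
      hyperbolicMobiusDenom_le_mul_add (by linarith)
    _ < 0 := mul_neg_of_pos_of_neg (by linarith) (by linarith)

-- Equality holds for `lam = 4`, `y = -3 * x`, `z = -2 * x`.
theorem sq_mul_sq_le_hyperbolicMobiusDenom_mul (hx : 0 ≤ x) (hlam : 4 ≤ lam)
    (hy : y ≤ -3 * x) (hz : 2 * (z + x) ≤ y + x) :
    lam ^ 2 * (y + x) ^ 2 ≤
      16 * (hyperbolicMobiusDenom x lam y * hyperbolicMobiusDenom x lam z) := by
  have hy_denom : hyperbolicMobiusDenom x lam y ≤ (lam - 2) * (y + x) :=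
    (hyperbolicMobiusDenom_le_mul_add (c := 1) (by linarith)).trans_eq (by ring)
  have hz_denom : hyperbolicMobiusDenom x lam z ≤ (lam - 3) * ((y + x) / 2) :=
    calc
      hyperbolicMobiusDenom x lam z ≤ (lam - 1 - 2) * (z + x) :=
        hyperbolicMobiusDenom_le_mul_add (by linarith)
      _ = (lam - 3) * (z + x) := by ring
      _ ≤ (lam - 3) * ((y + x) / 2) := by gcongr <;> linarith
  have hy_nonpos : (lam - 2) * (y + x) ≤ 0 :=
    mul_nonpos_of_nonneg_of_nonpos (by linarith) (by linarith)
  have hz_nonpos : (lam - 3) * ((y + x) / 2) ≤ 0 :=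
    mul_nonpos_of_nonneg_of_nonpos (by linarith) (by linarith)
  have hlam_sq : lam ^ 2 ≤ 8 * (lam - 2) * (lam - 3) := by
    have : 0 ≤ (lam - 4) * (7 * lam - 12) := mul_nonneg (by linarith) (by linarith)
    linarith
  calc
    lam ^ 2 * (y + x) ^ 2 ≤ 8 * (lam - 2) * (lam - 3) * (y + x) ^ 2 := by gcongr
    _ = 16 * ((lam - 2) * (y + x) * ((lam - 3) * ((y + x) / 2))) := by ring
    _ ≤ 16 * (hyperbolicMobiusDenom x lam y * hyperbolicMobiusDenom x lam z) := by
      refine mul_le_mul_of_nonneg_left ?_ (by norm_num)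
      exact mul_le_mul_of_nonpos_of_nonpos hy_denom hz_denom
        (hy_denom.trans hy_nonpos) hz_nonpos

theorem abs_hyperbolicMobius_sub_le (hx : 0 < x) (hlam : 4 ≤ lam) (hy : y ≤ -3 * x)
    (hz : 2 * (z + x) ≤ y + x) :
    |hyperbolicMobius x lam y - hyperbolicMobius x lam z| ≤
      64 * |y - z| / (lam * (y / x + 1) ^ 2) := by
  have : 0 < lam := by linarith
  have hyx : y + x ≠ 0 := by linarith
  have hy_neg : hyperbolicMobiusDenom x lam y < 0 :=
    hyperbolicMobiusDenom_neg hx (by linarith) (by linarith)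
  have hz_neg : hyperbolicMobiusDenom x lam z < 0 :=
    hyperbolicMobiusDenom_neg hx (by linarith) (by linarith)
  have hdenom := sq_mul_sq_le_hyperbolicMobiusDenom_mul hx.le hlam hy hz
  calc
    |hyperbolicMobius x lam y - hyperbolicMobius x lam z|
      = 4 * lam * x ^ 2 * |y - z| /
          (hyperbolicMobiusDenom x lam y * hyperbolicMobiusDenom x lam z) := by
        rw [hyperbolicMobius_sub hy_neg.ne hz_neg.ne, abs_div, abs_mul (4 * lam * x ^ 2),
          abs_of_pos (by positivity : 0 < 4 * lam * x ^ 2),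
          abs_of_pos (mul_pos_of_neg_of_neg hy_neg hz_neg)]
    _ ≤ 4 * lam * x ^ 2 * |y - z| / (lam ^ 2 * (y + x) ^ 2 / 16) := by
        gcongr
        linarith
    _ = 64 * |y - z| / (lam * (y / x + 1) ^ 2) := by
        rw [div_add_one hx.ne']
        field_simp
        ring

end OrderedField

theorem div_sqrt_mul_abs_sq {b : ℝ} (hb : 0 ≤ b) (a c : ℝ) :
    (c / (√b * |a|)) ^ 2 = c ^ 2 / (b * a ^ 2) := by
  rw [div_pow, mul_pow, Real.sq_sqrt hb, sq_abs]

theorem mobius_contraction_case_II_general (x lam y ρ : ℝ)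
    (hx : 0 < x) (hlam : 4 ≤ lam) (hy : y ≤ -3 * x) (hρ : 2 * ρ ≤ -(y + x))
    (h : ℝ → ℝ)
    (hh : ∀ t : ℝ, h t = (x * (lam + 1) * t + x ^ 2 * (lam - 1)) /
        ((lam - 1) * t + (lam + 1) * x)) :
    ((lam - 1) * y + (lam + 1) * x ≠ 0 ∧ (lam - 1) * (y + ρ) + (lam + 1) * x ≠ 0) ∧
    |h y - h (y + ρ)| ≤ (8 / (Real.sqrt lam * |y / x + 1|)) ^ 2 * |ρ| ∧
    (8 / (Real.sqrt lam * |y / x + 1|)) ^ 2 * |ρ| = 64 * |ρ| / (lam * (y / x + 1) ^ 2) := by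
  obtain rfl : h = hyperbolicMobius x lam := funext hh
  have hconst : (8 / (√lam * |y / x + 1|)) ^ 2 * |ρ| = 64 * |ρ| / (lam * (y / x + 1) ^ 2) := by
    rw [div_sqrt_mul_abs_sq (by linarith), div_mul_eq_mul_div]
    norm_num
  refine ⟨⟨?_, ?_⟩, ?_, hconst⟩
  · exact (hyperbolicMobiusDenom_neg hx (by linarith) (by linarith)).ne
  · exact (hyperbolicMobiusDenom_neg hx (by linarith) (by linarith)).ne
  · rw [hconst]
    simpa only [sub_add_cancel_left, abs_neg] using
      abs_hyperbolicMobius_sub_le (z := y + ρ) hx hlam hy (by linarith)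

theorem mobius_contraction_case_II (x lam y ρ : ℝ)
    (hx : 1 ≤ x) (hlam : 6 ≤ lam) (hy : y ≤ -3 * x) (hρ0 : 0 < ρ) (hρ1 : ρ ≤ 1)
    (h : ℝ → ℝ)
    (hh : ∀ t : ℝ, h t = (x * (lam + 1) * t + x ^ 2 * (lam - 1)) /
        ((lam - 1) * t + (lam + 1) * x)) :
    ((lam - 1) * y + (lam + 1) * x ≠ 0 ∧ (lam - 1) * (y + ρ) + (lam + 1) * x ≠ 0) ∧
    |h y - h (y + ρ)| ≤ (8 / (Real.sqrt lam * |y / x + 1|)) ^ 2 * ρ ∧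
    (8 / (Real.sqrt lam * |y / x + 1|)) ^ 2 * ρ = 64 * ρ / (lam * (y / x + 1) ^ 2) := by
  simpa only [abs_of_pos hρ0] using mobius_contraction_case_II_general x lam y ρ
    (by linarith) (by linarith) hy (by linarith) h hh
end

section
/- For all integers k ≥ 2 and i ≥ k+1, the series ∑_{j=i+1}^{∞} (2^{j²} − 2^{i²})^{−1/k} converges and its sum is at most (1/3) · 2^{−i²/k}. -/
/-!
Write `j = i + m` with `m ≥ 1`. Since `j ^ 2 - i ^ 2 = 2 * i * m + m ^ 2 ≥ 2 * k * m + 1`, and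
subtracting `b ^ (i ^ 2)` from `b ^ (j ^ 2)` costs at most one factor of the base `b ≥ 2`, each
term of the series is at most `(b ^ (i ^ 2 + 2 * k * m)) ^ (-1 / k) = b ^ (-i ^ 2 / k) * (b⁻²) ^ m`.
The geometric series of ratio `b⁻²`, started at `m = 1`, has sum `1 / (b ^ 2 - 1)`.
-/

/-- The enumeration `n ↦ i + 1 + n` of the integers above `i`, used to carry sums over a tail of `ℤ`
to sums over `ℕ`. -/
def natEquivIntGT (i : ℤ) : ℕ ≃ {j : ℤ // i < j} where
  toFun n := ⟨i + 1 + n, by lia⟩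
  invFun j := (j - (i + 1) : ℤ).toNat
  left_inv n := by simp
  right_inv := by
    rintro ⟨j, hj⟩
    ext
    dsimp only
    lia

lemma hasSum_zpow_sub_int_gt {K : Type*} [NormedDivisionRing K] {r : K} (hr : ‖r‖ < 1) (i : ℤ) :
    HasSum (fun j : {j : ℤ // i < j} ↦ r ^ ((j : ℤ) - i)) (r * (1 - r)⁻¹) := by
  have hcomp : (fun j : {j : ℤ // i < j} ↦ r ^ ((j : ℤ) - i)) ∘ natEquivIntGT i =
      fun n : ℕ ↦ r * r ^ n := by
    funext n
    have hexp : (natEquivIntGT i n : ℤ) - i = (n + 1 : ℕ) := by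
      simp only [natEquivIntGT, Equiv.coe_fn_mk]
      lia
    rw [Function.comp_apply, hexp, zpow_natCast, pow_succ']
  rw [← (natEquivIntGT i).hasSum_iff, hcomp]
  exact (hasSum_geometric_of_norm_lt_one hr).mul_left r

lemma rpow_sub_one_le_rpow_sub_rpow {b x y : ℝ} (hb : 2 ≤ b) (hxy : x + 1 ≤ y) :
    b ^ (y - 1) ≤ b ^ y - b ^ x := by
  have hx : b ^ x ≤ b ^ (y - 1) := Real.rpow_le_rpow_of_exponent_le (by linarith) (by linarith)
  have hy : 2 * b ^ (y - 1) ≤ b ^ y := calc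
    2 * b ^ (y - 1) ≤ b * b ^ (y - 1) := by gcongr
    _ = b ^ y := by rw [mul_comm, ← Real.rpow_add_one (by linarith), sub_add_cancel]
  linarith

lemma rpow_add_two_mul_le_rpow_sq_sub_rpow_sq {b k x y : ℝ} (hb : 2 ≤ b) (hk : 0 ≤ k)
    (hkx : k ≤ x) (hxy : x + 1 ≤ y) :
    b ^ (x ^ 2 + 2 * k * (y - x)) ≤ b ^ (y ^ 2) - b ^ (x ^ 2) := by
  have hsq : x ^ 2 + 2 * k * (y - x) ≤ y ^ 2 - 1 := by
    have hprod : 1 ≤ (y - x) * (y + x - 2 * k) :=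
      one_le_mul_of_one_le_of_one_le (by linarith) (by linarith)
    linarith
  calc b ^ (x ^ 2 + 2 * k * (y - x))
    _ ≤ b ^ (y ^ 2 - 1) := Real.rpow_le_rpow_of_exponent_le (by linarith) hsq
    _ ≤ b ^ (y ^ 2) - b ^ (x ^ 2) := rpow_sub_one_le_rpow_sub_rpow hb (by nlinarith)

lemma rpow_sq_sub_rpow_sq_rpow_le {b k x y : ℝ} (hb : 2 ≤ b) (hk : 0 < k)
    (hkx : k ≤ x) (hxy : x + 1 ≤ y) :
    (b ^ (y ^ 2) - b ^ (x ^ 2)) ^ (-1 / k) ≤ b ^ (-x ^ 2 / k) * ((b ^ 2)⁻¹) ^ (y - x) := by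
  have hb₀ : 0 < b := by linarith
  have hexp : (x ^ 2 + 2 * k * (y - x)) * (-1 / k) = -x ^ 2 / k + -2 * (y - x) := by
    field_simp
    ring
  have hratio : (b ^ 2)⁻¹ = b ^ (-2 : ℝ) := by rw [Real.rpow_neg hb₀.le, Real.rpow_two]
  calc (b ^ (y ^ 2) - b ^ (x ^ 2)) ^ (-1 / k)
    _ ≤ (b ^ (x ^ 2 + 2 * k * (y - x))) ^ (-1 / k) :=
        Real.rpow_le_rpow_of_nonpos (by positivity)
          (rpow_add_two_mul_le_rpow_sq_sub_rpow_sq hb hk.le hkx hxy)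
          (div_nonpos_of_nonpos_of_nonneg (by norm_num) hk.le)
    _ = b ^ (-x ^ 2 / k) * ((b ^ 2)⁻¹) ^ (y - x) := by
        rw [← Real.rpow_mul hb₀.le, hexp, Real.rpow_add hb₀, hratio, ← Real.rpow_mul hb₀.le]

theorem case_II_tail_estimate_general {b k : ℝ} (hb : 2 ≤ b) (hk : 0 < k) {i : ℤ} (hki : k ≤ i) :
    Summable (fun j : {j : ℤ // i < j} ↦ (b ^ ((j : ℤ) ^ 2) - b ^ (i ^ 2)) ^ (-1 / k)) ∧
    ∑' j : {j : ℤ // i < j}, (b ^ ((j : ℤ) ^ 2) - b ^ (i ^ 2)) ^ (-1 / k)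
      ≤ 1 / (b ^ 2 - 1) * b ^ (-(i : ℝ) ^ 2 / k) := by
  have hb_sq : 1 < b ^ 2 := by nlinarith
  have hratio : ‖(b ^ 2)⁻¹‖ < 1 := by
    rw [Real.norm_of_nonneg (by positivity)]
    exact inv_lt_one_of_one_lt₀ hb_sq
  have hgeom := (hasSum_zpow_sub_int_gt hratio i).mul_left (b ^ (-(i : ℝ) ^ 2 / k))
  have hnonneg (j : {j : ℤ // i < j}) : 0 ≤ (b ^ ((j : ℤ) ^ 2) - b ^ (i ^ 2)) ^ (-1 / k) := by
    have hi : (0 : ℤ) < i := by exact_mod_cast hk.trans_le hki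
    have hij : i ^ 2 ≤ (j : ℤ) ^ 2 := by gcongr; exact j.2.le
    exact Real.rpow_nonneg (sub_nonneg.2 (zpow_le_zpow_right₀ (by linarith) hij)) _
  have hterm (j : {j : ℤ // i < j}) : (b ^ ((j : ℤ) ^ 2) - b ^ (i ^ 2)) ^ (-1 / k) ≤
      b ^ (-(i : ℝ) ^ 2 / k) * ((b ^ 2)⁻¹) ^ ((j : ℤ) - i) := by
    have hij : (i : ℝ) + 1 ≤ (j : ℤ) := by exact_mod_cast j.2
    exact_mod_cast rpow_sq_sub_rpow_sq_rpow_le hb hk hki hij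
  have hsum := hgeom.summable.of_nonneg_of_le hnonneg hterm
  refine ⟨hsum, (hasSum_le hterm hsum.hasSum hgeom).trans_eq ?_⟩
  have hb_ne : b ^ 2 - 1 ≠ 0 := by linarith
  field_simp

theorem case_II_tail_estimate (k i : ℤ) (hk : 2 ≤ k) (hi : k + 1 ≤ i) :
    Summable (fun j : {j : ℤ // i < j} =>
      ((2:ℝ) ^ ((j : ℤ) ^ 2) - (2:ℝ) ^ (i ^ 2)) ^ (-(1 : ℝ) / (k : ℝ))) ∧
    ∑' j : {j : ℤ // i < j},
        ((2:ℝ) ^ ((j : ℤ) ^ 2) - (2:ℝ) ^ (i ^ 2)) ^ (-(1 : ℝ) / (k : ℝ))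
      ≤ (1 / 3) * (2:ℝ) ^ (-((i : ℝ) ^ 2) / (k : ℝ)) :=
  (case_II_tail_estimate_general le_rfl (by exact_mod_cast (by lia : 0 < k))
    (by exact_mod_cast (by lia : k ≤ i))).imp_right fun h ↦ h.trans_eq (by norm_num)
end
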